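/- arXiv:1402.6817 — 2 statements merged into one kernel-verified Lean document; each statement's English description precedes it below -/
import Mathlib

section
/- Let n = h + d where h ≥ 4 is a Hadamard order and d ≥ 1. Then D(n)/n^{n/2} ≥ (2/(π·e))^{d/2}·(1 − d²·√(π/(2h))). -/
open Matrix

/-- A positive integer `m` is a Hadamard order if there is an `m × m` matrix
with entries in `{−1, 1}` satisfying `Aᵀ A = m I`. -/
def IsHadamardOrder (m : ℕ) : Prop :=
  ∃ A : Matrix (Fin m) (Fin m) ℝ,
    (∀ i j, A i j = 1 ∨ A i j = -1) ∧ Aᵀ * A = (m : ℝ) • 1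

/-- `D(n)`: the maximal determinant of an `n × n` matrix with entries in
`{−1, 1}`. -/
noncomputable def maxDet (n : ℕ) : ℝ :=
  sSup {x : ℝ | ∃ M : Matrix (Fin n) (Fin n) ℝ,
    (∀ i j, M i j = 1 ∨ M i j = -1) ∧ M.det = x}

noncomputable def sg (y : ℝ) : ℝ := if 0 ≤ y then 1 else -1
lemma sg_mul (y : ℝ) : sg y * y = |y| := by
  unfold sg; split_ifs with h
  · rw [abs_of_nonneg h, one_mul]
  · rw [abs_of_neg (not_le.1 h)]; ring
noncomputable def uv (u : ℤˣ) : ℝ := ((u : ℤ) : ℝ)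
lemma uv_mul (u v : ℤˣ) : uv (u*v) = uv u * uv v := by simp [uv]
lemma uv_or (u : ℤˣ) : uv u = 1 ∨ uv u = -1 := by
  rcases Int.units_eq_one_or u with h | h <;> simp [uv, h]
lemma uv_sq (u : ℤˣ) : uv u * uv u = 1 := by
  rcases uv_or u with h | h <;> simp [h]

noncomputable def TT (h : ℕ) : ℝ := ∑ x : Fin h → ℤˣ, |∑ i, uv (x i)|

lemma W_lemma (h : ℕ) (a : Matrix (Fin h) (Fin h) ℤˣ)
    (orth : ∀ k l, k ≠ l → ∑ i, uv (a i k) * uv (a i l) = 0) (k l : Fin h) :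
    ∑ x : Fin h → ℤˣ, sg (∑ i, uv (a i k) * uv (x i)) * (∑ i, uv (a i l) * uv (x i))
      = if k = l then TT h else 0 := by
  have step : ∑ x : Fin h → ℤˣ, sg (∑ i, uv (a i k) * uv (x i)) * (∑ i, uv (a i l) * uv (x i))
      = ∑ y : Fin h → ℤˣ, sg (∑ i, uv (y i)) * (∑ i, (uv (a i k) * uv (a i l)) * uv (y i)) := by
    refine (Fintype.sum_equiv (Equiv.mulLeft (fun i => a i k)) _ _ ?_).symm
    intro x
    simp only [Equiv.coe_mulLeft, Pi.mul_apply, uv_mul]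
    have q1 : ∑ i, uv (a i k) * (uv (a i k) * uv (x i)) = ∑ i, uv (x i) :=
      Finset.sum_congr rfl fun i _ => by rw [← mul_assoc, uv_sq, one_mul]
    have q2 : ∑ i, uv (a i l) * (uv (a i k) * uv (x i)) = ∑ i, uv (a i k) * uv (a i l) * uv (x i) :=
      Finset.sum_congr rfl fun i _ => by ring
    rw [q1, q2]
  rw [step]
  split_ifs with hkl
  · subst hkl
    simp only [uv_sq, one_mul, sg_mul]; rfl
  · have R : ∀ i j : Fin h, ∑ y : Fin h → ℤˣ, sg (∑ i, uv (y i)) * uv (y i)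
        = ∑ y : Fin h → ℤˣ, sg (∑ i, uv (y i)) * uv (y j) := by
      intro i j
      refine Fintype.sum_equiv (Equiv.arrowCongr (Equiv.swap i j) (Equiv.refl _)) _ _ ?_
      intro x
      simp only [Equiv.arrowCongr_apply, Equiv.coe_refl, Function.comp, id, Equiv.symm_swap, Equiv.swap_apply_right]
      rw [Equiv.sum_comp (Equiv.swap i j) (fun t => uv (x t))]
    simp only [Finset.mul_sum]
    rw [Finset.sum_comm]
    calc _ = ∑ i, (uv (a i k) * uv (a i l)) * ∑ y : Fin h → ℤˣ, sg (∑ i, uv (y i)) * uv (y k) := by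
          refine Finset.sum_congr rfl fun i _ => ?_
          rw [← R i k, Finset.mul_sum]
          refine Finset.sum_congr rfl fun y _ => ?_
          ring
      _ = 0 := by rw [← Finset.sum_mul, orth k l hkl, zero_mul]

lemma sum_pi_prod {d : ℕ} {Ω : Type*} [Fintype Ω] [DecidableEq Ω] (f : Fin d → Ω → ℝ) :
    ∑ B : Fin d → Ω, ∏ i, f i (B i) = ∏ i, ∑ w, f i w := by
  rw [Finset.prod_univ_sum]; simp

lemma sum_det_lemma {d h : ℕ} {Ω : Type*} [Fintype Ω] [DecidableEq Ω] (S Y : Ω → Fin h → ℝ)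
    (T : ℝ) (hT : 0 ≤ T) (hW : ∀ k l, ∑ w, S w k * Y w l = if k = l then T else 0) :
    T ^ d * (h.descFactorial d : ℝ) ≤
     ∑ B : Fin d → Ω, (Matrix.of fun i j : Fin d => ∑ k, S (B i) k * Y (B j) k).det := by
  have e1 : ∑ B : Fin d → Ω, (Matrix.of fun i j : Fin d => ∑ k, S (B i) k * Y (B j) k).det
      = ∑ g : Fin d → Fin h, T ^ d * (Matrix.of fun i j : Fin d => if g i = g j then (1:ℝ) else 0).det := by
    simp only [Matrix.det_apply', Matrix.of_apply, Finset.prod_univ_sum, Fintype.piFinset_univ, Finset.mul_sum]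
    rw [Finset.sum_comm, Finset.sum_comm (s := (Finset.univ : Finset (Fin d → Fin h)))]
    refine Finset.sum_congr rfl fun σ _ => ?_
    rw [Finset.sum_comm]
    have key : ∀ g : Fin d → Fin h, ∑ B : Fin d → Ω, ((Equiv.Perm.sign σ : ℤ) : ℝ) * ∏ i, S (B (σ i)) (g i) * Y (B i) (g i)
        = ((Equiv.Perm.sign σ : ℤ) : ℝ) * (T ^ d * ∏ i, if g (σ i) = g i then (1:ℝ) else 0) := by
      intro g
      rw [← Finset.mul_sum]
      congr 1
      have : ∀ B : Fin d → Ω, ∏ i, S (B (σ i)) (g i) * Y (B i) (g i)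
          = ∏ i, (S (B i) (g (σ⁻¹ i)) * Y (B i) (g i)) := by
        intro B
        rw [Finset.prod_mul_distrib, Finset.prod_mul_distrib]
        congr 1
        rw [← Equiv.prod_comp σ (fun i => S (B i) (g (σ⁻¹ i)))]
        simp
      simp only [this]
      rw [sum_pi_prod (fun i w => S w (g (σ⁻¹ i)) * Y w (g i))]
      simp only [hW]
      have : T ^ d = ∏ i : Fin d, T := by simp
      rw [this, ← Finset.prod_mul_distrib, ← Equiv.prod_comp σ]
      refine Finset.prod_congr rfl fun i _ => ?_
      simp [eq_comm]
    rw [Finset.sum_congr rfl fun g _ => key g]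
    refine Finset.sum_congr rfl fun g _ => ?_
    ring
  rw [e1, ← Finset.mul_sum]
  refine mul_le_mul_of_nonneg_left ?_ (pow_nonneg hT _)
  have e2 : ∀ g : Fin d → Fin h, (Matrix.of fun i j : Fin d => if g i = g j then (1:ℝ) else 0).det
      = if Function.Injective g then 1 else 0 := by
    intro g
    split_ifs with hg
    · convert Matrix.det_one (n := Fin d) (R := ℝ)
      ext i j
      simp [Matrix.one_apply, hg.eq_iff]
    · simp only [Function.Injective, not_forall] at hg
      obtain ⟨i, j, hij, hne⟩ := hg
      refine Matrix.det_zero_of_row_eq hne ?_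
      ext t
      simp [hij]
  simp only [e2]
  rw [Finset.sum_boole]
  have : h.descFactorial d = Fintype.card (Fin d ↪ Fin h) := by simp [Fintype.card_embedding_eq]
  rw [this, Fintype.card_congr (Equiv.subtypeInjectiveEquivEmbedding (Fin d) (Fin h)).symm, Fintype.card_subtype]

lemma exists_D {d : ℕ} (F : Matrix (Fin d) (Fin d) ℝ) :
    ∃ D : Matrix (Fin d) (Fin d) ℝ, (∀ i j, D i j = 1 ∨ D i j = -1) ∧ F.det ≤ (F - D).det := by
  have z : ∀ r : Fin d, ∑ c : Fin d → ℤˣ, uv (c r) = 0 := by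
    intro r
    have : ∑ c : Fin d → ℤˣ, uv (c r) = ∑ c : Fin d → ℤˣ, - uv (c r) := by
      refine Fintype.sum_equiv (Equiv.neg _) _ _ ?_
      intro c; simp [uv]
    rw [Finset.sum_neg_distrib] at this
    linarith
  have e : ∑ D : Fin d → (Fin d → ℤˣ), (F - Matrix.of fun i j => uv (D j i)).det
      = ∑ D : Fin d → (Fin d → ℤˣ), F.det := by
    simp only [Matrix.det_apply']
    rw [Finset.sum_comm, Finset.sum_comm (t := (Finset.univ : Finset (Equiv.Perm (Fin d))))]
    refine Finset.sum_congr rfl fun σ _ => ?_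
    rw [← Finset.mul_sum, ← Finset.mul_sum]
    congr 1
    simp only [Matrix.sub_apply, Matrix.of_apply]
    rw [sum_pi_prod (fun i (c : Fin d → ℤˣ) => F (σ i) i - uv (c (σ i))),
      sum_pi_prod (fun i (c : Fin d → ℤˣ) => F (σ i) i)]
    refine Finset.prod_congr rfl fun i _ => ?_
    rw [Finset.sum_sub_distrib, z, sub_zero]
  obtain ⟨D, -, hD⟩ := Finset.exists_le_of_sum_le Finset.univ_nonempty e.ge
  exact ⟨Matrix.of fun i j => uv (D j i), fun i j => uv_or _, hD⟩

lemma partial_sum (n m : ℕ) :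
    ∑ j ∈ Finset.range m, (n.choose j : ℝ) * ((n:ℝ) - 2 * j) = m * n.choose m := by
  induction m with
  | zero => simp
  | succ m ih =>
    rw [Finset.sum_range_succ, ih]
    have h1 := Nat.choose_succ_right_eq n m
    rcases le_or_gt m n with hmn | hmn
    · have h2 : (n.choose (m+1) : ℝ) * (m+1) = n.choose m * (n - m) := by
        have := congrArg (Nat.cast (R := ℝ)) h1
        push_cast [Nat.cast_sub hmn] at this
        exact this
      push_cast
      linarith
    · rw [Nat.choose_eq_zero_of_lt hmn, Nat.choose_eq_zero_of_lt (by omega)]; simp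

lemma abs_sum (k : ℕ) :
    ∑ j ∈ Finset.range (2*k+1), ((2*k).choose j : ℝ) * |((2*k : ℕ):ℝ) - 2 * j| = 2 * k * (2*k).choose k := by
  have h1 := partial_sum (2*k) k
  have h2 := partial_sum (2*k) (2*k+1)
  rw [Nat.choose_succ_self] at h2
  rw [← Finset.sum_range_add_sum_Ico _ (show k ≤ 2*k+1 by omega)] at h2 ⊢
  have e1 : ∑ j ∈ Finset.range k, ((2*k).choose j : ℝ) * |((2*k : ℕ):ℝ) - 2 * j|
    = ∑ j ∈ Finset.range k, ((2*k).choose j : ℝ) * (((2*k : ℕ):ℝ) - 2 * j) := by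
    refine Finset.sum_congr rfl fun j hj => ?_
    have : (j:ℝ) ≤ k := by exact_mod_cast (Finset.mem_range.1 hj).le
    rw [abs_of_nonneg]; push_cast; linarith
  have e2 : ∑ j ∈ Finset.Ico k (2*k+1), ((2*k).choose j : ℝ) * |((2*k : ℕ):ℝ) - 2 * j|
    = - ∑ j ∈ Finset.Ico k (2*k+1), ((2*k).choose j : ℝ) * (((2*k : ℕ):ℝ) - 2 * j) := by
    rw [← Finset.sum_neg_distrib]
    refine Finset.sum_congr rfl fun j hj => ?_
    have : (k:ℝ) ≤ j := by exact_mod_cast (Finset.mem_Ico.1 hj).1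
    rw [abs_of_nonpos]; · ring
    push_cast; linarith
  rw [e1, e2]
  push_cast at *
  linarith

lemma TT_eq (k : ℕ) : TT (2*k) = 2 * k * (2*k).choose k := by
  rw [← abs_sum]
  unfold TT
  have := Finset.sum_powerset_apply_card (fun j => |((2*k : ℕ):ℝ) - 2 * j|) (x := (Finset.univ : Finset (Fin (2*k))))
  simp only [Finset.card_univ, Fintype.card_fin, nsmul_eq_mul] at this
  rw [← this]
  refine Finset.sum_bij' (fun x _ => Finset.univ.filter (fun i => x i = -1)) (fun s _ i => if i ∈ s then -1 else 1) ?_ ?_ ?_ ?_ ?_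
  · simp
  · simp
  · intro x _
    ext i
    rcases Int.units_eq_one_or (x i) with h | h <;> simp [h]
  · intro s _
    ext i
    by_cases h : i ∈ s <;> simp [h]
  · intro x _
    congr 1
    have : ∀ i, uv (x i) = 1 - 2 * (if x i = -1 then 1 else 0) := by
      intro i
      rcases Int.units_eq_one_or (x i) with h | h <;> simp [h, uv]
      norm_num
    simp only [this, Finset.sum_sub_distrib, ← Finset.mul_sum, Finset.sum_boole]
    simp

lemma wallis_bound (k : ℕ) : 2 / (Real.pi * (2*k+1)) ≤ ((2*k).choose k / 4 ^ k : ℝ)^2 := by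
  have h := Real.Wallis.W_le k
  rw [Real.Wallis.W_eq_factorial_ratio] at h
  have hc : ((2*k).choose k : ℝ) = (2*k).factorial / (k.factorial * k.factorial) := by
    rw [Nat.cast_choose ℝ (by omega : k ≤ 2*k)]
    congr; omega
  rw [hc]
  have hp := Real.pi_pos
  have f1 : (0:ℝ) < k.factorial := by positivity
  have f2 : (0:ℝ) < (2*k).factorial := by positivity
  have h4 : (2:ℝ)^(4*k) = (4^k)^2 := by rw [← pow_mul, mul_comm k 2, pow_mul, pow_mul]; norm_num [← pow_mul]
  rw [h4, div_le_div_iff₀ (by positivity) (by positivity)] at h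
  rw [div_div, div_pow, div_le_div_iff₀ (by positivity) (by positivity)]
  nlinarith

lemma TT_bound (k : ℕ) (hk : 1 ≤ k) : Real.sqrt (2 * (2*k:ℕ) / Real.pi) * (1 - 1 / ((2*k:ℕ):ℝ)) ≤ TT (2*k) / 2^(2*k) := by
  have hw := Real.sqrt_le_sqrt (wallis_bound k)
  rw [Real.sqrt_sq (by positivity)] at hw
  have hk' : (1:ℝ) ≤ k := by exact_mod_cast hk
  have e : TT (2*k) / 2^(2*k) = 2 * k * ((2*k).choose k / 4 ^ k : ℝ) := by
    rw [TT_eq, pow_mul]; norm_num; ring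
  rw [e]
  refine le_trans ?_ (mul_le_mul_of_nonneg_left hw (by positivity))
  have hp := Real.pi_pos
  apply le_of_sq_le_sq _ (by positivity)
  rw [mul_pow, mul_pow, Real.sq_sqrt (by positivity), Real.sq_sqrt (by positivity)]
  push_cast
  have : (2 * (2*(k:ℝ)) / Real.pi) * (1 - 1/(2*k))^2 = (2/Real.pi) * ((2*k-1)^2/(2*k)) := by
    field_simp
  rw [this]
  have : (2 * (k:ℝ))^2 * (2 / (Real.pi * (2*k+1))) = (2/Real.pi) * ((2*k)^2/(2*k+1)) := by
    field_simp
  rw [this]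
  refine mul_le_mul_of_nonneg_left ?_ (by positivity)
  rw [div_le_div_iff₀ (by positivity) (by positivity)]
  nlinarith

lemma le_maxDet {n : ℕ} (hn : 2 ≤ n) (M : Matrix (Fin n) (Fin n) ℝ)
    (hM : ∀ i j, M i j = 1 ∨ M i j = -1) : |M.det| ≤ maxDet n := by
  have bdd : BddAbove {x : ℝ | ∃ M : Matrix (Fin n) (Fin n) ℝ,
      (∀ i j, M i j = 1 ∨ M i j = -1) ∧ M.det = x} := by
    refine ⟨(Fintype.card (Fin n)).factorial • (1:ℝ) ^ Fintype.card (Fin n), ?_⟩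
    rintro x ⟨N, hN, rfl⟩
    refine le_trans (le_abs_self _) (Matrix.det_le (abv := AbsoluteValue.abs) (x := (1:ℝ)) ?_)
    intro i j
    rcases hN i j with h | h <;> simp [h]
  rcases abs_choice M.det with h | h
  · rw [h]; exact le_csSup bdd ⟨M, hM, rfl⟩
  · rw [h]
    refine le_csSup bdd ⟨M.submatrix (Equiv.swap (⟨0, by omega⟩ : Fin n) ⟨1, by omega⟩) id, fun i j => hM _ _, ?_⟩
    rw [Matrix.det_permute, Equiv.Perm.sign_swap (by simp)]
    simp

lemma maxDet_lower (h d : ℕ) (hh : 4 ≤ h) (A : Matrix (Fin h) (Fin h) ℝ)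
    (a : Matrix (Fin h) (Fin h) ℤˣ) (ha : ∀ i j, A i j = uv (a i j))
    (hA : Aᵀ * A = (h : ℝ) • 1) :
    (h:ℝ) ^ ((h:ℝ)/2) * ((TT h / 2^h / h) ^ d * (h.descFactorial d : ℝ)) ≤ maxDet (h + d) := by
  have h0 : (0:ℝ) < h := by exact_mod_cast (by omega : 0 < h)
  have orth : ∀ k l, k ≠ l → ∑ i, uv (a i k) * uv (a i l) = 0 := by
    intro k l hkl
    have := congrFun (congrFun hA k) l
    simpa [Matrix.mul_apply, ha, Matrix.one_apply, hkl] using this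
  have hT : 0 ≤ TT h := Finset.sum_nonneg fun x _ => abs_nonneg _
  have hs := sum_det_lemma (d := d) (fun (x : Fin h → ℤˣ) k => sg (∑ i, uv (a i k) * uv (x i)))
    (fun x k => ∑ i, uv (a i k) * uv (x i)) (TT h) hT (W_lemma h a orth)
  have hs2 : ∑ B : Fin d → (Fin h → ℤˣ), (TT h / 2^h) ^ d * (h.descFactorial d : ℝ) = TT h ^ d * (h.descFactorial d : ℝ) := by
    rw [Finset.sum_const, Finset.card_univ]
    simp
    rw [div_pow]
    field_simp
  obtain ⟨B, -, hB⟩ := Finset.exists_le_of_sum_le Finset.univ_nonempty (hs2.trans_le hs)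
  set G : Matrix (Fin d) (Fin d) ℝ := Matrix.of fun i j : Fin d => ∑ k, sg (∑ m, uv (a m k) * uv (B i m)) * ∑ m, uv (a m k) * uv (B j m) with hG
  obtain ⟨D, hD, hdet⟩ := exists_D ((1/(h:ℝ)) • G)
  have inv : ((1/(h:ℝ)) • Aᵀ) * A = 1 := by
    rw [Matrix.smul_mul, hA, smul_smul]; simp [h0.ne']
  let _ : Invertible A := ⟨(1/(h:ℝ)) • Aᵀ, inv, mul_eq_one_comm.1 inv⟩
  have hinv : ⅟A = (1/(h:ℝ)) • Aᵀ := rfl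
  set Bm : Matrix (Fin h) (Fin d) ℝ := Matrix.of fun m j => uv (B j m) with hBm
  set C : Matrix (Fin d) (Fin h) ℝ := Matrix.of fun i k => sg (∑ m, uv (a m k) * uv (B i m)) with hC
  have hF : C * ⅟A * Bm = (1/(h:ℝ)) • G := by
    rw [hinv, Matrix.mul_smul, Matrix.smul_mul, Matrix.mul_assoc]
    congr 1
    ext i j
    simp [Matrix.mul_apply, hC, hBm, hG, ha]
  have hM := Matrix.det_fromBlocks₁₁ A Bm C D
  rw [hF, ← neg_sub, Matrix.det_neg] at hM
  set M := fromBlocks A Bm C D with hMdef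
  have hent : ∀ i j, M i j = 1 ∨ M i j = -1 := by
    rintro (i | i) (j | j)
    · simp only [hMdef, fromBlocks_apply₁₁, ha]; exact uv_or _
    · simp only [hMdef, fromBlocks_apply₁₂]; exact uv_or _
    · simp only [hMdef, fromBlocks_apply₂₁, hC, Matrix.of_apply, sg]
      split_ifs <;> simp
    · simp only [hMdef, fromBlocks_apply₂₂]; exact hD _ _
  have hle := le_maxDet (n := h + d) (by omega) (Matrix.reindex finSumFinEquiv finSumFinEquiv M)
    (fun i j => hent _ _)
  rw [Matrix.det_reindex_self, hM, abs_mul, abs_mul, abs_pow, abs_neg, abs_one, one_pow, one_mul] at hle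
  refine le_trans ?_ hle
  have hdA : |A.det| = (h:ℝ) ^ ((h:ℝ)/2) := by
    have := congrArg Matrix.det hA
    rw [Matrix.det_mul, Matrix.det_transpose, Matrix.det_smul, Matrix.det_one, mul_one, Fintype.card_fin, ← sq] at this
    rw [← Real.sqrt_sq_eq_abs, this, Real.sqrt_eq_rpow, ← Real.rpow_natCast, ← Real.rpow_mul h0.le]
    congr 1; ring
  rw [hdA]
  refine mul_le_mul_of_nonneg_left ?_ (by positivity)
  refine le_trans ?_ (le_abs_self _)
  refine le_trans ?_ hdet
  rw [Matrix.det_smul, Fintype.card_fin]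
  calc (TT h / 2^h / h) ^ d * (h.descFactorial d : ℝ) = (1/(h:ℝ))^d * ((TT h / 2^h)^d * (h.descFactorial d : ℝ)) := by
        rw [div_pow (TT h / 2^h), one_div, inv_pow]; ring
    _ ≤ _ := mul_le_mul_of_nonneg_left hB (by positivity)

lemma even_h (h : ℕ) (hh : 4 ≤ h) (a : Matrix (Fin h) (Fin h) ℤˣ)
    (orth : ∀ k l, k ≠ l → ∑ i, uv (a i k) * uv (a i l) = 0) : ∃ k, h = 2 * k := by
  have h1 := orth ⟨0, by omega⟩ ⟨1, by omega⟩ (by simp)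
  have h2 : ∑ i, ((a i ⟨0, by omega⟩ * a i ⟨1, by omega⟩ : ℤˣ) : ℤ) = 0 := by
    have : ((∑ i, ((a i ⟨0, by omega⟩ * a i ⟨1, by omega⟩ : ℤˣ) : ℤ) : ℤ) : ℝ) = 0 := by
      rw [← h1]; simp [uv]
    exact_mod_cast this
  have h3 := congrArg (Int.cast (R := ZMod 2)) h2
  have h4 : ∀ u : ℤˣ, ((u : ℤ) : ZMod 2) = 1 := by
    intro u
    rcases Int.units_eq_one_or u with h | h <;> simp [h]
  rw [Int.cast_sum] at h3
  simp only [h4] at h3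
  simp at h3
  have := (ZMod.natCast_eq_zero_iff h 2).1 h3
  exact this

lemma final_num (h d : ℕ) (hh : 4 ≤ h) (hd : 1 ≤ d)
    (hx : (d : ℝ) ^ 2 * Real.sqrt (Real.pi / (2 * h)) < 1) (t : ℝ)
    (ht : Real.sqrt (2 * h / Real.pi) * (1 - 1 / (h:ℝ)) ≤ t) :
    (2 / (Real.pi * Real.exp 1)) ^ ((d : ℝ) / 2) *
        (1 - (d : ℝ) ^ 2 * Real.sqrt (Real.pi / (2 * h))) * ((h + d : ℕ) : ℝ) ^ (((h + d : ℕ) : ℝ) / 2)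
     ≤ (h:ℝ) ^ ((h:ℝ)/2) * ((t / h) ^ d * (h.descFactorial d : ℝ)) := by
  have hp := Real.pi_pos
  have hp3 := Real.pi_gt_d2
  have h4 : (4:ℝ) ≤ h := by exact_mod_cast hh
  have h0 : (0:ℝ) < h := by linarith
  have d1 : (1:ℝ) ≤ d := by exact_mod_cast hd
  set q : ℝ := (d:ℝ)^2 / (2*h) with hq
  have hq0 : 0 ≤ q := by positivity
  set x := (d : ℝ) ^ 2 * Real.sqrt (Real.pi / (2 * h)) with hxdef
  have hxq : 5 * q ≤ x := by
    have : 5 / (2*(h:ℝ)) ≤ Real.sqrt (Real.pi / (2 * h)) := by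
      apply Real.le_sqrt_of_sq_le
      rw [div_pow, div_le_div_iff₀ (by positivity) (by positivity)]
      nlinarith
    calc 5 * q = (d:ℝ)^2 * (5 / (2*(h:ℝ))) := by rw [hq]; ring
      _ ≤ x := mul_le_mul_of_nonneg_left this (by positivity)
  have hq5 : q < 1/5 := by linarith
  have hdq : (d:ℝ) * d = 2 * h * q := by rw [hq]; field_simp
  have hdh : (d:ℝ) < h := by nlinarith
  have hdh' : d ≤ h := by exact_mod_cast hdh.le
  -- descFactorial
  have hdf : (h:ℝ)^d * (1 - 2*q + d / h) ≤ (h.descFactorial d : ℝ) := by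
    have n1 : (((h + 1 - d : ℕ)^d : ℕ) : ℝ) ≤ (h.descFactorial d : ℝ) := by
      exact_mod_cast Nat.pow_sub_le_descFactorial h d
    refine le_trans ?_ n1
    push_cast [Nat.cast_sub (by omega : d ≤ h + 1)]
    have e : (h:ℝ) + 1 - d = h * (1 + (1 - d)/h) := by field_simp; ring
    rw [e, mul_pow]
    refine mul_le_mul_of_nonneg_left ?_ (by positivity)
    have b := one_add_mul_le_pow (a := (1 - (d:ℝ))/h) (by rw [le_div_iff₀ h0]; linarith) d
    refine le_trans (le_of_eq ?_) b
    rw [hq]; field_simp; ring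
  have hdh2 : (d:ℝ)/h ≤ 2*q := by
    rw [div_le_iff₀ h0]; nlinarith
  have hdh0 : 0 < (d:ℝ)/h := by positivity
  -- power of t
  have hr : (1 - (d:ℝ)/h) ≤ (1 - 1/(h:ℝ))^d := by
    have h1h : 1/(h:ℝ) ≤ 1 := by rw [div_le_one h0]; linarith
    have b := one_add_mul_le_pow (a := -(1/(h:ℝ))) (by linarith) d
    rw [← sub_eq_add_neg] at b
    refine le_trans (le_of_eq ?_) b
    ring
  have h1h : 0 ≤ 1 - 1/(h:ℝ) := by
    rw [sub_nonneg, div_le_one h0]; linarith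
  have htd : Real.sqrt (2 * h / Real.pi) ^ d * (1 - (d:ℝ)/h) ≤ t^d := by
    calc _ ≤ Real.sqrt (2 * h / Real.pi) ^ d * (1 - 1/(h:ℝ))^d :=
          mul_le_mul_of_nonneg_left hr (by positivity)
      _ = (Real.sqrt (2 * h / Real.pi) * (1 - 1 / (h:ℝ)))^d := by rw [mul_pow]
      _ ≤ t^d := pow_le_pow_left₀ (by positivity) ht d
  have ht0 : 0 ≤ t := le_trans (by positivity) ht
  -- n power
  have hn : ((h + d : ℕ) : ℝ) ^ (((h + d : ℕ) : ℝ) / 2) ≤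
      (h:ℝ) ^ (((h:ℝ) + d)/2) * (Real.exp 1 ^ ((d:ℝ)/2) * Real.exp q) := by
    push_cast
    have e : (h:ℝ) + d = h * (1 + d/h) := by field_simp
    have l : (h:ℝ) + d ≤ h * Real.exp (d/h) := by
      rw [e]
      refine mul_le_mul_of_nonneg_left ?_ h0.le
      linarith [Real.add_one_le_exp ((d:ℝ)/h)]
    refine le_trans (Real.rpow_le_rpow (by positivity) l (by positivity)) ?_
    rw [Real.mul_rpow h0.le (by positivity), ← Real.exp_mul, ← Real.exp_mul, ← Real.exp_add]
    refine le_of_eq ?_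
    congr 2
    rw [hq]; field_simp
  have hexp : (1 - x) * Real.exp q ≤ (1 - (d:ℝ)/h) * (1 - 2*q + d/h) := by
    have e1 : (1 - q) * Real.exp q ≤ 1 := by
      have := Real.add_one_le_exp (-q)
      calc (1 - q) * Real.exp q ≤ Real.exp (-q) * Real.exp q :=
            mul_le_mul_of_nonneg_right (by linarith) (Real.exp_pos _).le
        _ = 1 := by rw [← Real.exp_add]; simp
    have e2 : 1 - x ≤ (1 - 4*q) * (1 - q) := by nlinarith
    calc (1 - x) * Real.exp q ≤ (1 - 4*q) * (1 - q) * Real.exp q :=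
          mul_le_mul_of_nonneg_right e2 (Real.exp_pos _).le
      _ = (1 - 4*q) * ((1 - q) * Real.exp q) := by ring
      _ ≤ (1 - 4*q) * 1 := mul_le_mul_of_nonneg_left e1 (by linarith)
      _ ≤ _ := by nlinarith
  have hpow : (2 / (Real.pi * Real.exp 1)) ^ ((d : ℝ) / 2) * ((h:ℝ) ^ (((h:ℝ) + d)/2) * (Real.exp 1 ^ ((d:ℝ)/2)))
      = (h:ℝ) ^ ((h:ℝ)/2) * Real.sqrt (2 * h / Real.pi) ^ d := by
    have s1 : Real.sqrt (2 * h / Real.pi) ^ d = (2 * h / Real.pi) ^ ((d:ℝ)/2) := by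
      rw [Real.sqrt_eq_rpow, ← Real.rpow_natCast, ← Real.rpow_mul (by positivity)]
      congr 1; ring
    rw [s1, add_div, Real.rpow_add h0]
    have s2 : (2 * h / Real.pi) ^ ((d:ℝ)/2) = (2 / (Real.pi * Real.exp 1)) ^ ((d : ℝ) / 2) * (h:ℝ) ^ ((d:ℝ)/2) * (Real.exp 1 ^ ((d:ℝ)/2)) := by
      rw [← Real.mul_rpow (by positivity) (by positivity), ← Real.mul_rpow (by positivity) (by positivity)]
      congr 1
      field_simp
    rw [s2]; ring
  have hdf0 : 0 ≤ 1 - 2*q + (d:ℝ)/h := by linarith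
  calc _ ≤ (2 / (Real.pi * Real.exp 1)) ^ ((d : ℝ) / 2) * (1 - x) * ((h:ℝ) ^ (((h:ℝ) + d)/2) * (Real.exp 1 ^ ((d:ℝ)/2) * Real.exp q)) := by
        refine mul_le_mul_of_nonneg_left hn (mul_nonneg (by positivity) (by linarith))
    _ = ((2 / (Real.pi * Real.exp 1)) ^ ((d : ℝ) / 2) * ((h:ℝ) ^ (((h:ℝ) + d)/2) * (Real.exp 1 ^ ((d:ℝ)/2)))) * ((1 - x) * Real.exp q) := by ring
    _ = (h:ℝ) ^ ((h:ℝ)/2) * Real.sqrt (2 * h / Real.pi) ^ d * ((1 - x) * Real.exp q) := by rw [hpow]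
    _ ≤ (h:ℝ) ^ ((h:ℝ)/2) * Real.sqrt (2 * h / Real.pi) ^ d * ((1 - (d:ℝ)/h) * (1 - 2*q + d/h)) :=
        mul_le_mul_of_nonneg_left hexp (by positivity)
    _ = (h:ℝ) ^ ((h:ℝ)/2) * ((Real.sqrt (2 * h / Real.pi) ^ d * (1 - (d:ℝ)/h)) * (1 - 2*q + d/h)) := by ring
    _ ≤ (h:ℝ) ^ ((h:ℝ)/2) * (t ^ d * (1 - 2*q + d/h)) := by
        refine mul_le_mul_of_nonneg_left ?_ (by positivity)
        exact mul_le_mul_of_nonneg_right htd hdf0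
    _ = (h:ℝ) ^ ((h:ℝ)/2) * ((t / h) ^ d * ((h:ℝ)^d * (1 - 2*q + d/h))) := by
        rw [div_pow]; field_simp
    _ ≤ _ := by
        refine mul_le_mul_of_nonneg_left ?_ (by positivity)
        exact mul_le_mul_of_nonneg_left hdf (by positivity)

/-- Let `n = h + d` where `h ≥ 4` is a Hadamard order and `d ≥ 1`.  Then
`D(n)/n^{n/2} ≥ (2/(πe))^{d/2} (1 − d² √(π/(2h)))`. -/
theorem normalized_maxDet_lower_bound_Chebyshev (h d n : ℕ)
    (hh : 4 ≤ h) (hH : IsHadamardOrder h) (hd : 1 ≤ d) (hn : n = h + d) :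
    maxDet n / (n : ℝ) ^ ((n : ℝ) / 2) ≥
      (2 / (Real.pi * Real.exp 1)) ^ ((d : ℝ) / 2) *
        (1 - (d : ℝ) ^ 2 * Real.sqrt (Real.pi / (2 * h))) := by
  have h0 : (0:ℝ) < h := by exact_mod_cast (by omega : 0 < h)
  subst hn
  obtain ⟨A, hA1, hA2⟩ := hH
  have hn0 : (0:ℝ) < ((h + d : ℕ) : ℝ) := by exact_mod_cast (by omega : 0 < h + d)
  rcases lt_or_ge ((d : ℝ) ^ 2 * Real.sqrt (Real.pi / (2 * h))) 1 with hx | hx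
  · have : ∀ i j, ∃ u : ℤˣ, A i j = uv u := by
      intro i j
      rcases hA1 i j with e | e
      · exact ⟨1, by simp [uv, e]⟩
      · exact ⟨-1, by simp [uv, e]⟩
    choose a ha using this
    have orth : ∀ k l, k ≠ l → ∑ i, uv (a i k) * uv (a i l) = 0 := by
      intro k l hkl
      have := congrFun (congrFun hA2 k) l
      simpa [Matrix.mul_apply, ha, Matrix.one_apply, hkl] using this
    obtain ⟨k, hk⟩ := even_h h hh a orth
    have hb := TT_bound k (by omega)
    rw [← hk] at hb
    have h1 := maxDet_lower h d hh A a ha hA2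
    have h2 := final_num h d hh hd hx _ hb
    rw [ge_iff_le, le_div_iff₀ (by positivity)]
    exact h2.trans h1
  · have h1 : 0 ≤ maxDet (h + d) :=
      (abs_nonneg _).trans (le_maxDet (n := h + d) (by omega) (fun _ _ => 1) (fun _ _ => Or.inl rfl))
    have h2 : 0 ≤ maxDet (h + d) / ((h + d : ℕ) : ℝ) ^ (((h + d : ℕ) : ℝ) / 2) := by positivity
    refine le_trans ?_ h2
    exact mul_nonpos_of_nonneg_of_nonpos (by positivity) (by linarith)
end

section
/- Let d ≥ 1, let h ≥ 4 be a Hadamard order with Hadamard matrix A, and for B ∈ {−1,1}^{h×d} define C by c_{ij} = sgn((AᵀB)_{ji}), F = C A⁻¹ B, and G = F + I. Then there exists a choice of B ∈ {−1,1}^{h×d} such that det(G) ≥ μ(h)^d·(1 − 2d·√((d−1)·e)/μ(h)). -/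
open Matrix

/-- The `±1` sign function: `sgn x = 1` if `x ≥ 0`, `−1` if `x < 0`. -/
noncomputable def sgn (x : ℝ) : ℝ := if 0 ≤ x then 1 else -1

/-- The `h × d` sign matrix corresponding to a Boolean matrix `b`. -/
noncomputable def signMat {h d : ℕ} (b : Fin h → Fin d → Bool) :
    Matrix (Fin h) (Fin d) ℝ :=
  Matrix.of fun i j => if b i j then (1 : ℝ) else -1

/-- The matrix `C` with `c_{ij} = sgn((Aᵀ B)_{ji})`. -/
noncomputable def Cmat {h d : ℕ} (A : Matrix (Fin h) (Fin h) ℝ)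
    (B : Matrix (Fin h) (Fin d) ℝ) : Matrix (Fin d) (Fin h) ℝ :=
  Matrix.of fun i j => sgn ((Aᵀ * B) j i)

/-- The matrix `F = C A⁻¹ B`. -/
noncomputable def Fmat {h d : ℕ} (A : Matrix (Fin h) (Fin h) ℝ)
    (B : Matrix (Fin h) (Fin d) ℝ) : Matrix (Fin d) (Fin d) ℝ :=
  Cmat A B * A⁻¹ * B

/-- Expectation of `f(B)`, averaged over the `2^(h·d)` equally likely
`h × d` matrices `B` with entries in `{−1, 1}`. -/
noncomputable def expec (h d : ℕ) (f : Matrix (Fin h) (Fin d) ℝ → ℝ) : ℝ :=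
  (∑ b : Fin h → Fin d → Bool, f (signMat b)) / 2 ^ (h * d)


/-- `μ(h) = 1 + 2^{−h} h binom(h, h/2)`. -/
noncomputable def mu (h : ℕ) : ℝ :=
  1 + (2 : ℝ) ^ (-(h : ℤ)) * h * (h.choose (h / 2) : ℝ)


def sb (x : Bool) : ℝ := if x then 1 else -1

theorem sb_sq (x : Bool) : sb x ^ 2 = 1 := by cases x <;> simp [sb]
theorem sb_not (x : Bool) : sb (!x) = - sb x := by cases x <;> simp [sb]

theorem sum_cons {n : ℕ} (f : (Fin (n+1) → Bool) → ℝ) :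
    ∑ b, f b = ∑ b : Fin n → Bool, f (Fin.cons true b) + ∑ b : Fin n → Bool, f (Fin.cons false b) := by
  rw [← (Fin.consEquiv (fun _ => Bool)).sum_comp, Fintype.sum_prod_type]
  simp [Fin.consEquiv]

def flp {n : ℕ} (l : Fin n) (b : Fin n → Bool) : Fin n → Bool := Function.update b l (!b l)

theorem flp_flp {n : ℕ} (l : Fin n) (b : Fin n → Bool) : flp l (flp l b) = b := by
  simp [flp]

theorem sum_flp {n : ℕ} (l : Fin n) (f : (Fin n → Bool) → ℝ) :
    ∑ b, f (flp l b) = ∑ b, f b :=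
  Equiv.sum_comp (Function.Involutive.toPerm (flp l) (flp_flp l)) f

theorem poincare : ∀ (n : ℕ) (f : (Fin n → Bool) → ℝ),
    2^n * ∑ b, f b ^ 2 - (∑ b, f b)^2 ≤ 2^n * (1/4) * ∑ b, ∑ l, (f b - f (flp l b))^2 := by
  intro n
  induction n with
  | zero => intro f; simp
  | succ n ih =>
    intro f
    have h0 := ih (fun b => f (Fin.cons true b))
    have h1 := ih (fun b => f (Fin.cons false b))
    have hc : (∑ b : Fin n → Bool, (f (Fin.cons true b) - f (Fin.cons false b)))^2
        ≤ 2^n * ∑ b : Fin n → Bool, (f (Fin.cons true b) - f (Fin.cons false b))^2 := by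
      have := sq_sum_le_card_mul_sum_sq (s := Finset.univ) (f := fun b : Fin n → Bool => f (Fin.cons true b) - f (Fin.cons false b))
      simpa using this
    have e0 : ∀ (t : Bool) (b : Fin n → Bool), flp 0 (Fin.cons t b : Fin (n+1) → Bool) = Fin.cons (!t) b := by
      intro t b; simp [flp]
    have e1 : ∀ (t : Bool) (b : Fin n → Bool) (l : Fin n), flp l.succ (Fin.cons t b : Fin (n+1) → Bool) = Fin.cons t (flp l b) := by
      intro t b l; simp [flp]
    simp only [sum_cons, Fin.sum_univ_succ, e0, e1, Finset.sum_add_distrib, Bool.not_true, Bool.not_false]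
    simp only [Finset.sum_sub_distrib] at hc
    have : ∑ b : Fin n → Bool, (f (Fin.cons false b) - f (Fin.cons true b))^2 = ∑ b : Fin n → Bool, (f (Fin.cons true b) - f (Fin.cons false b))^2 := 
      Finset.sum_congr rfl fun b _ => by ring
    rw [this, pow_succ]
    nlinarith

theorem sum_lin : ∀ (n : ℕ) (x : ℝ) (u : Fin n → ℝ),
    ∑ a : Fin n → Bool, (x + ∑ l, u l * sb (a l))^2 = 2^n * (x^2 + ∑ l, u l^2) := by
  intro n
  induction n with
  | zero => intro x u; simp
  | succ n ih =>
    intro x u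
    have h0 := ih (x + u 0) (fun l => u l.succ)
    have h1 := ih (x - u 0) (fun l => u l.succ)
    rw [sum_cons]
    simp only [Fin.sum_univ_succ, Fin.cons_zero, Fin.cons_succ]
    simp only [← add_assoc]
    simp only [sb, if_true, mul_one, mul_neg, Bool.false_eq_true, if_false, ← sub_eq_add_neg] at *
    rw [h0, h1]; ring

theorem sum_g : ∀ (n : ℕ) (g : ℝ → ℝ),
    ∑ a : Fin n → Bool, g (∑ l, sb (a l)) = ∑ k ∈ Finset.range (n+1), (n.choose k : ℝ) * g (n - 2 * k) := by
  intro n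
  induction n with
  | zero => intro g; simp
  | succ n ih =>
    intro g
    have h0 := ih (fun x => g (1 + x))
    have h1 := ih (fun x => g (-1 + x))
    rw [sum_cons]
    simp only [Fin.sum_univ_succ, Fin.cons_zero, Fin.cons_succ]
    simp only [sb, if_true, Bool.false_eq_true, if_false] at *
    rw [h0, h1, Finset.sum_range_succ' _ (n+1)]
    simp only [Nat.choose_succ_succ, Nat.cast_add, add_mul, Finset.sum_add_distrib]
    rw [Finset.sum_range_succ' _ n, Finset.sum_range_succ (fun k => ((n.choose (k+1) : ℕ):ℝ) * _) n]
    simp only [Nat.choose_succ_self]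
    push_cast
    have : ∀ a b c d a' b' c' : ℝ, a = a' → b = b' → c = c' → a + b + c = c' + (a' + 0 * d) + b' := by
      intros; subst_vars; ring
    apply this
    · exact Finset.sum_congr rfl fun k _ => by ring_nf
    · simp; ring_nf
    · exact Finset.sum_congr rfl fun k _ => by ring_nf

theorem sum_half (n : ℕ) : ∀ j : ℕ, ∑ k ∈ Finset.range (j+1), ((n+1).choose k : ℝ) * ((n+1 : ℝ) - 2 * k) = (n+1) * n.choose j := by
  intro j
  induction j with
  | zero => simp
  | succ j ih =>
    rw [Finset.sum_range_succ, ih]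
    have h1 : ((n+1 : ℕ):ℝ) * n.choose j = (n+1).choose (j+1) * ((j+1 : ℕ):ℝ) := by
      exact_mod_cast Nat.add_one_mul_choose_eq n j
    have h2 : ((n+1).choose (j+1) : ℝ) = n.choose j + n.choose (j+1) := by
      exact_mod_cast Nat.choose_succ_succ n j
    push_cast at *
    have h3 : ((n+1).choose (j+1) : ℝ) * (n+1) = (n+1) * n.choose j + (n+1) * n.choose (j+1) := by rw [h2]; ring
    linarith

theorem sum_abs (m : ℕ) (hm : 1 ≤ m) :
    ∑ a : Fin (2*m) → Bool, |∑ l, sb (a l)| = (2*m : ℝ) * (2*m).choose m := by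
  rw [sum_g (2*m) (fun x => |x|)]
  obtain ⟨p, rfl⟩ : ∃ p, m = p + 1 := ⟨m-1, by omega⟩
  have e : 2 * (p+1) + 1 = (p + 1) + (p + 2) := by ring
  have key := sum_half (2*p+1) p
  have hfirst : ∑ k ∈ Finset.range (p+1), ((2*(p+1)).choose k : ℝ) * |((2*(p+1) : ℕ):ℝ) - 2 * k| = (2*p+2) * (2*p+1).choose p := by
    rw [show (2*p+2 : ℝ) = ((2*p+1 : ℕ):ℝ) + 1 by push_cast; ring, ← key]
    apply Finset.sum_congr rfl
    intro k hk
    have : (k:ℝ) ≤ p := by exact_mod_cast Nat.lt_succ_iff.mp (Finset.mem_range.mp hk)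
    rw [abs_of_nonneg (by push_cast; linarith)]
    push_cast
    ring_nf
  have hsecond : ∑ k ∈ Finset.range (p+2), ((2*(p+1)).choose (p+1+k) : ℝ) * |((2*(p+1) : ℕ):ℝ) - 2 * ((p+1+k : ℕ):ℝ)| = (2*p+2) * (2*p+1).choose p := by
    rw [← hfirst, ← Finset.sum_range_reflect, Finset.sum_range_succ]
    have : ((p + 1 + (p + 2 - 1 - (p+1)) : ℕ)) = p + 1 := by omega
    rw [this]
    have z : |((2*(p+1) : ℕ):ℝ) - 2 * ((p+1 : ℕ):ℝ)| = 0 := by push_cast; simp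
    rw [z, mul_zero, add_zero]
    apply Finset.sum_congr rfl
    intro k hk
    have hk' := Finset.mem_range.mp hk
    have e1 : p + 1 + (p + 2 - 1 - k) = 2*(p+1) - k := by omega
    rw [e1, Nat.choose_symm (by omega), Nat.cast_sub (by omega), abs_sub_comm]
    congr 2
    push_cast
    ring
  rw [e, Finset.sum_range_add, hfirst, hsecond]
  have : ((2*(p+1)).choose (p+1) : ℝ) = 2 * (2*p+1).choose p := by
    have : (2*(p+1)).choose (p+1) = (2*p+1).choose p + (2*p+1).choose (p+1) := Nat.choose_succ_succ (2*p+1) p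
    rw [this, show (2*p+1).choose (p+1) = (2*p+1).choose p from Nat.choose_symm_half p]
    push_cast; ring
  rw [this]; push_cast; ring

theorem sum_upd {ι α : Type*} [Fintype ι] [DecidableEq ι] [Fintype α] (j : ι) (H : (ι → α) → ℝ) :
    ∑ b, ∑ a, H (Function.update b j a) = Fintype.card α * ∑ b, H b := by
  have inv : Function.Involutive (fun p : (ι → α) × α => (Function.update p.1 j p.2, p.1 j)) := by
    rintro ⟨b, a⟩; simp
  have := Equiv.sum_comp (inv.toPerm) (fun p : (ι → α) × α => H p.1)
  rw [Fintype.sum_prod_type, Fintype.sum_prod_type] at this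
  simp only [Function.Involutive.coe_toPerm] at this
  rw [this]
  simp [Finset.mul_sum]

theorem sum_upd_le {ι α : Type*} [Fintype ι] [DecidableEq ι] [Fintype α] [Nonempty α] (j : ι) (H : (ι → α) → ℝ) (K : ℝ)
    (hH : ∀ b, ∑ a, H (Function.update b j a) ≤ Fintype.card α * K) :
    ∑ b, H b ≤ Fintype.card (ι → α) * K := by
  have h1 := sum_upd j H
  have h2 : ∑ b : ι → α, ∑ a, H (Function.update b j a) ≤ ∑ b : ι → α, Fintype.card α * K := Finset.sum_le_sum fun b _ => hH b
  rw [h1] at h2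
  simp only [Finset.sum_const, nsmul_eq_mul, Finset.card_univ] at h2
  have : (0:ℝ) < Fintype.card α := by exact_mod_cast Fintype.card_pos
  nlinarith

theorem hadam_ineq {d : ℕ} (M : Matrix (Fin d) (Fin d) ℝ) : |M.det| ≤ ∏ i, √(∑ j, M i j ^ 2) := by
  rcases Nat.eq_zero_or_pos d with rfl | hd
  · simp
  have : Fact (Module.finrank ℝ (EuclideanSpace ℝ (Fin d)) = d) := ⟨by simp⟩
  let bs := EuclideanSpace.basisFun (Fin d) ℝ
  have h1 := bs.toBasis.orientation.abs_volumeForm_apply_le (fun i => WithLp.toLp 2 (M i))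
  have h2 := bs.toBasis.orientation.volumeForm_robust bs rfl
  rw [h2, Module.Basis.det_apply] at h1
  have : bs.toBasis.toMatrix (fun i => WithLp.toLp 2 (M i)) = Mᵀ := by
    ext i j; simp [Module.Basis.toMatrix_apply, bs]
  rw [this, det_transpose] at h1
  simpa [EuclideanSpace.norm_eq] using h1

theorem det_pert {d : ℕ} (mu : ℝ) (hmu : 0 < mu) (N : Matrix (Fin d) (Fin d) ℝ) :
    (2 * mu^d - ∏ i, (mu + √(∑ j, N i j ^ 2))) ≤ (mu • (1 : Matrix (Fin d) (Fin d) ℝ) + N).det := by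
  classical
  let P : Finset (Fin d) → Matrix (Fin d) (Fin d) ℝ := fun s i j => if i ∈ s then N i j else mu * (1 : Matrix (Fin d) (Fin d) ℝ) i j
  let Q : Finset (Fin d) → ℝ := fun s => ∏ i, if i ∈ s then √(∑ j, N i j ^ 2) else mu
  have h1 := (detRowAlternating (R := ℝ) (n := Fin d)).toMultilinearMap.map_add_univ N (mu • (1 : Matrix (Fin d) (Fin d) ℝ))
  have h2 : (mu • (1 : Matrix (Fin d) (Fin d) ℝ) + N).det = ∑ s : Finset (Fin d), (P s).det := by
    rw [add_comm]; refine h1.trans ?_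
    refine Finset.sum_congr rfl fun s _ => ?_
    change Matrix.det _ = _
    congr 1
    ext i j
    by_cases hi : i ∈ s
    · simp [P, hi, Finset.piecewise]
    · simp [P, hi, Finset.piecewise]
  have h3 : ∏ i, (mu + √(∑ j, N i j ^ 2)) = ∑ s : Finset (Fin d), Q s := by
    simp only [add_comm mu]
    rw [Finset.prod_add, Finset.powerset_univ]
    refine Finset.sum_congr rfl fun s _ => ?_
    simp only [Q]
    rw [Finset.prod_ite]
    congr 2 <;> ext i <;> simp
  have h4 : ∀ s : Finset (Fin d), |(P s).det| ≤ Q s := by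
    intro s
    refine (hadam_ineq _).trans (le_of_eq ?_)
    apply Finset.prod_congr rfl
    intro i _
    by_cases hi : i ∈ s
    · simp [P, hi]
    · simp [P, hi, Matrix.one_apply, Real.sqrt_sq hmu.le]
  have h6 : (P ∅).det = mu ^ d := by
    have : P ∅ = mu • 1 := by ext i j; simp [P]
    rw [this]; simp
  have h7 : Q ∅ = mu ^ d := by simp [Q]
  have h5 : ∑ s ∈ Finset.univ.erase (∅ : Finset (Fin d)), - Q s ≤ ∑ s ∈ Finset.univ.erase (∅ : Finset (Fin d)), (P s).det :=
    Finset.sum_le_sum fun s _ => (abs_le.mp (h4 s)).1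
  rw [Finset.sum_neg_distrib] at h5
  rw [h2, h3, ← Finset.add_sum_erase _ Q (Finset.mem_univ ∅), ← Finset.add_sum_erase _ (fun s => (P s).det) (Finset.mem_univ ∅)]
  simp only [h6, h7]
  linarith

noncomputable def vv {h : ℕ} (A : Matrix (Fin h) (Fin h) ℝ) (b : Fin h → Bool) (k : Fin h) : ℝ :=
  ∑ l, A l k * sb (b l)
noncomputable def uu {h : ℕ} (A : Matrix (Fin h) (Fin h) ℝ) (b : Fin h → Bool) (l : Fin h) : ℝ :=
  (h : ℝ)⁻¹ * ∑ k, A l k * sgn (vv A b k)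
noncomputable def Phi {h : ℕ} (A : Matrix (Fin h) (Fin h) ℝ) (a b : Fin h → Bool) : ℝ :=
  ∑ l, uu A a l * sb (b l)

theorem sgn_sq (x : ℝ) : sgn x * sgn x = 1 := by unfold sgn; split_ifs <;> norm_num
theorem sgn_mul_self' (x : ℝ) : sgn x * x = |x| := by
  unfold sgn; split_ifs with hx
  · rw [abs_of_nonneg hx, one_mul]
  · rw [abs_of_neg (not_le.mp hx)]; ring
theorem sgn_mul_le (x y : ℝ) : sgn x * y ≤ |y| := by
  unfold sgn; split_ifs with hx
  · rw [one_mul]; exact le_abs_self y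
  · rw [neg_one_mul]; exact neg_le_abs y

theorem Phi_eq {h : ℕ} (A : Matrix (Fin h) (Fin h) ℝ) (a b : Fin h → Bool) :
    Phi A a b = (h : ℝ)⁻¹ * ∑ k, sgn (vv A a k) * vv A b k := by
  unfold Phi uu
  simp only [vv, Finset.mul_sum, Finset.sum_mul]
  rw [Finset.sum_comm]
  refine Finset.sum_congr rfl fun k _ => Finset.sum_congr rfl fun l _ => by ring

theorem Phi_self {h : ℕ} (A : Matrix (Fin h) (Fin h) ℝ) (a : Fin h → Bool) :
    Phi A a a = (h : ℝ)⁻¹ * ∑ k, |vv A a k| := by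
  rw [Phi_eq]; simp only [sgn_mul_self']

theorem Phi_self_nonneg {h : ℕ} (A : Matrix (Fin h) (Fin h) ℝ) (a : Fin h → Bool) :
    0 ≤ Phi A a a := by
  rw [Phi_self]; positivity

theorem Phi_le {h : ℕ} (A : Matrix (Fin h) (Fin h) ℝ) (a b : Fin h → Bool) :
    Phi A a b ≤ Phi A b b := by
  rw [Phi_self, Phi_eq]
  refine mul_le_mul_of_nonneg_left (Finset.sum_le_sum fun k _ => sgn_mul_le _ _) (by positivity)

theorem uu_sq {h : ℕ} (hh : 0 < h) (A : Matrix (Fin h) (Fin h) ℝ)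
    (hA2 : Aᵀ * A = (h : ℝ) • 1) (a : Fin h → Bool) : ∑ l, uu A a l ^ 2 = 1 := by
  have hh' : (h:ℝ) ≠ 0 := by positivity
  let c : Fin h → ℝ := fun k => sgn (vv A a k)
  have h1 : ∑ l, uu A a l ^ 2 = (h:ℝ)⁻¹ ^ 2 * ((A *ᵥ c) ⬝ᵥ (A *ᵥ c)) := by
    simp only [uu, dotProduct, mulVec, Finset.mul_sum, c, mul_pow]
    refine Finset.sum_congr rfl fun k _ => ?_
    simp only [← Finset.mul_sum]; ring
  have h2 : (A *ᵥ c) ⬝ᵥ (A *ᵥ c) = (h:ℝ) * (c ⬝ᵥ c) := by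
    rw [dotProduct_mulVec, vecMul_mulVec, hA2]
    simp [dotProduct_comm, smul_mulVec, vecMul_smul]
  have h3 : c ⬝ᵥ c = h := by simp [dotProduct, c, sgn_sq]
  rw [h1, h2, h3]; field_simp

theorem sum_vv {h : ℕ} (h4 : 4 ∣ h) (hh : 4 ≤ h) (A : Matrix (Fin h) (Fin h) ℝ)
    (hA1 : ∀ i j, A i j = 1 ∨ A i j = -1) (k : Fin h) :
    ∑ a, |vv A a k| = (h : ℝ) * h.choose (h/2) := by
  classical
  let σ : (Fin h → Bool) → (Fin h → Bool) := fun a l => if A l k = 1 then a l else !a l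
  have hσ : Function.Involutive σ := by
    intro a; ext l; by_cases hl : A l k = 1 <;> simp [σ, hl]
  have h1 : ∀ a, vv A (σ a) k = ∑ l, sb (a l) := by
    intro a
    refine Finset.sum_congr rfl fun l _ => ?_
    by_cases hl : A l k = 1
    · simp [σ, hl]
    · have := (hA1 l k).resolve_left hl
      simp only [σ, hl, if_false, sb_not]; rw [this]; ring
  rw [← Equiv.sum_comp hσ.toPerm]
  simp only [Function.Involutive.coe_toPerm, h1]
  obtain ⟨m, rfl⟩ : ∃ m, h = 2 * m := ⟨h/2, by omega⟩
  rw [sum_abs m (by omega)]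
  simp

theorem sum_diag {h : ℕ} (h4 : 4 ∣ h) (hh : 4 ≤ h) (A : Matrix (Fin h) (Fin h) ℝ)
    (hA1 : ∀ i j, A i j = 1 ∨ A i j = -1) :
    ∑ a, Phi A a a = 2^h * (mu h - 1) := by
  have hh' : (h:ℝ) ≠ 0 := by positivity
  simp only [Phi_self, ← Finset.mul_sum]
  rw [Finset.sum_comm]
  simp only [sum_vv h4 hh A hA1, mu]
  simp
  field_simp

theorem flp_diff {h : ℕ} (A : Matrix (Fin h) (Fin h) ℝ) (a : Fin h → Bool) (l : Fin h) :
    Phi A a a - Phi A (flp l a) (flp l a) ≤ 2 * |uu A a l| := by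
  have h1 := Phi_le A a (flp l a)
  have h2 : Phi A a a - Phi A a (flp l a) = 2 * (uu A a l * sb (a l)) := by
    unfold Phi
    rw [← Finset.sum_sub_distrib, Finset.sum_eq_single l]
    · simp only [flp, Function.update_self, sb_not]; ring
    · intro k _ hk; simp [flp, hk]
    · simp
  have h3 : uu A a l * sb (a l) ≤ |uu A a l| := by
    refine (le_abs_self _).trans ?_
    rw [abs_mul]; cases a l <;> simp [sb]
  linarith

theorem sum_var {h : ℕ} (h4 : 4 ∣ h) (hh : 4 ≤ h) (A : Matrix (Fin h) (Fin h) ℝ)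
    (hA1 : ∀ i j, A i j = 1 ∨ A i j = -1) (hA2 : Aᵀ * A = (h : ℝ) • 1) :
    ∑ a, (Phi A a a - (mu h - 1))^2 ≤ 2^h * 2 := by
  have hp := poincare h (fun a => Phi A a a)
  have hs := sum_diag h4 hh A hA1
  have hu := uu_sq (by omega) A hA2
  have hD : ∑ a, ∑ l, (Phi A a a - Phi A (flp l a) (flp l a))^2 ≤ 8 * 2^h := by
    have h1 : ∀ a l, (Phi A a a - Phi A (flp l a) (flp l a))^2 ≤ 4 * uu A a l ^2 + 4 * uu A (flp l a) l ^ 2 := by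
      intro a l
      have e1 := flp_diff A a l
      have e2 := flp_diff A (flp l a) l
      rw [flp_flp] at e2
      rw [← sq_abs (uu A a l), ← sq_abs (uu A (flp l a) l)]
      have p1 := abs_nonneg (uu A a l)
      have p2 := abs_nonneg (uu A (flp l a) l)
      rcases le_total 0 (Phi A a a - Phi A (flp l a) (flp l a)) with hx | hx <;> nlinarith
    refine (Finset.sum_le_sum fun a _ => Finset.sum_le_sum fun l _ => h1 a l).trans ?_
    simp only [Finset.sum_add_distrib, ← Finset.mul_sum, hu]
    rw [Finset.sum_comm (f := fun a l => uu A (flp l a) l ^ 2)]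
    have h2 : ∀ l, ∑ a, uu A (flp l a) l ^ 2 = ∑ a, uu A a l ^ 2 := fun l => sum_flp l (fun a => uu A a l ^ 2)
    simp only [h2]
    rw [Finset.sum_comm]
    simp only [hu]
    simp
    linarith
  have hpos : (0:ℝ) < 2^h := by positivity
  have he : ∑ a, (Phi A a a - (mu h - 1))^2 = ∑ a, Phi A a a ^2 - 2^h * (mu h - 1)^2 := by
    simp only [sub_sq, Finset.sum_add_distrib, Finset.sum_sub_distrib, ← Finset.mul_sum, ← Finset.sum_mul, hs]
    simp
    ring
  rw [he]
  simp only [hs] at hp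
  have : (2:ℝ)^h * (∑ a, Phi A a a ^2 - 2^h * (mu h - 1)^2) ≤ 2^h * (2^h * 2) := by nlinarith
  exact le_of_mul_le_mul_left this hpos

theorem sum_off {h : ℕ} (hh : 4 ≤ h) (A : Matrix (Fin h) (Fin h) ℝ)
    (hA2 : Aᵀ * A = (h : ℝ) • 1) (a : Fin h → Bool) :
    ∑ b, Phi A a b ^2 = 2^h := by
  have := sum_lin h 0 (uu A a)
  simp only [zero_add, uu_sq (by omega : 0 < h) A hA2] at this
  simpa [Phi] using this

def colMat {h d : ℕ} (b : Fin d → Fin h → Bool) : Matrix (Fin h) (Fin d) ℝ := fun i j => sb (b j i)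

theorem colMat_pm {h d : ℕ} (b : Fin d → Fin h → Bool) (i j) : colMat b i j = 1 ∨ colMat b i j = -1 := by
  unfold colMat sb; split_ifs <;> simp

theorem Fmat_apply {h d : ℕ} (hh : 4 ≤ h) (A : Matrix (Fin h) (Fin h) ℝ)
    (hA2 : Aᵀ * A = (h : ℝ) • 1) (b : Fin d → Fin h → Bool) (i j : Fin d) :
    Fmat A (colMat b) i j = Phi A (b i) (b j) := by
  have hh' : (h:ℝ) ≠ 0 := by positivity
  have hinv : A⁻¹ = (h:ℝ)⁻¹ • Aᵀ := by
    apply Matrix.inv_eq_left_inv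
    rw [Matrix.smul_mul, hA2, smul_smul, inv_mul_cancel₀ hh', one_smul]
  have hv : ∀ k j, (Aᵀ * colMat b) k j = vv A (b j) k := by
    intro k j; simp [Matrix.mul_apply, vv, colMat]
  unfold Fmat
  rw [hinv, Matrix.mul_assoc, Matrix.smul_mul, Matrix.mul_smul, Matrix.smul_apply, Matrix.mul_apply, Phi_eq]
  simp only [hv, Cmat, Matrix.of_apply, smul_eq_mul]

theorem mu_pos (h : ℕ) : 1 ≤ mu h := by
  unfold mu
  have : (0:ℝ) ≤ (2 : ℝ) ^ (-(h : ℤ)) * h * (h.choose (h / 2) : ℝ) := by positivity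
  linarith

theorem exists_good {h d : ℕ} (h4 : 4 ∣ h) (hh : 4 ≤ h) (A : Matrix (Fin h) (Fin h) ℝ)
    (hA1 : ∀ i j, A i j = 1 ∨ A i j = -1) (hA2 : Aᵀ * A = (h : ℝ) • 1) :
    ∃ b : Fin d → Fin h → Bool, ∑ i, ∑ j, (Fmat A (colMat b) + 1 - mu h • 1) i j ^ 2 ≤ (d:ℝ)^2 + d := by
  by_contra! hcon
  have hlt : ∑ b : Fin d → Fin h → Bool, ((d:ℝ)^2 + d) < ∑ b : Fin d → Fin h → Bool, ∑ i, ∑ j, (Fmat A (colMat b) + 1 - mu h • 1) i j ^ 2 :=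
    Finset.sum_lt_sum_of_nonempty Finset.univ_nonempty fun b _ => hcon b
  have key : ∀ i j : Fin d, ∑ b : Fin d → Fin h → Bool, (Fmat A (colMat b) + 1 - mu h • 1) i j ^ 2 ≤
      Fintype.card (Fin d → Fin h → Bool) * (1 + if i = j then 1 else 0) := by
    intro i j
    apply sum_upd_le j
    intro b
    have hc : (Fintype.card (Fin h → Bool) : ℝ) = 2^h := by simp
    rw [hc]
    simp only [Matrix.sub_apply, Matrix.add_apply, Fmat_apply hh A hA2, Matrix.smul_apply, Matrix.one_apply]
    by_cases hij : i = j
    · subst hij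
      simp only [Function.update_self, if_true]
      have := sum_var h4 hh A hA1 hA2
      convert this using 1
      · refine Finset.sum_congr rfl fun a _ => ?_
        simp; ring
      · norm_num
    · simp only [Function.update_self, Function.update_of_ne hij, if_neg hij]
      have := sum_off hh A hA2 (b i)
      simp [this]
  have h2 : ∑ b : Fin d → Fin h → Bool, ∑ i, ∑ j, (Fmat A (colMat b) + 1 - mu h • 1) i j ^ 2 ≤
      ∑ i : Fin d, ∑ j : Fin d, (Fintype.card (Fin d → Fin h → Bool) * (1 + if i = j then 1 else 0) : ℝ) := by
    rw [Finset.sum_comm]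
    refine Finset.sum_le_sum fun i _ => ?_
    rw [Finset.sum_comm]
    exact Finset.sum_le_sum fun j _ => key i j
  have h3 : ∑ i : Fin d, ∑ j : Fin d, (Fintype.card (Fin d → Fin h → Bool) * (1 + if i = j then 1 else 0) : ℝ) = ∑ b : Fin d → Fin h → Bool, ((d:ℝ)^2 + d) := by
    simp only [← Finset.mul_sum, Finset.sum_add_distrib, Finset.sum_const, Finset.card_univ, nsmul_eq_mul, Finset.sum_ite_eq, Finset.mem_univ, if_true, Fintype.card_fin, mul_one]
    ring
  linarith

theorem det_bound {d : ℕ} (m : ℝ) (hm : 0 < m) (N : Matrix (Fin d) (Fin d) ℝ)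
    (hN : ∑ i, ∑ j, N i j ^ 2 ≤ (d:ℝ)^2 + d) :
    m^d * (2 - Real.exp (d * √(d+1) / m)) ≤ (m • (1 : Matrix (Fin d) (Fin d) ℝ) + N).det := by
  refine le_trans ?_ (det_pert m hm N)
  have hsum : ∑ i, √(∑ j, N i j ^ 2) ≤ d * √(d+1) := by
    apply le_of_sq_le_sq ?_ (by positivity)
    have := sq_sum_le_card_mul_sum_sq (s := Finset.univ) (f := fun i : Fin d => √(∑ j, N i j ^ 2))
    refine this.trans ?_
    have e : ∀ i, √(∑ j, N i j ^ 2) ^ 2 = ∑ j, N i j ^ 2 := fun i => Real.sq_sqrt (by positivity)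
    simp only [e]
    rw [mul_pow, Real.sq_sqrt (by positivity)]
    simp only [Finset.card_univ, Fintype.card_fin]
    have : (d:ℝ) * ∑ i, ∑ j, N i j ^ 2 ≤ d * ((d:ℝ)^2 + d) := by gcongr
    linarith
  have hprod : ∏ i, (m + √(∑ j, N i j ^ 2)) ≤ m^d * Real.exp (d * √(d+1) / m) := by
    calc ∏ i, (m + √(∑ j, N i j ^ 2)) ≤ ∏ i : Fin d, (m * Real.exp (√(∑ j, N i j ^ 2) / m)) := by
          refine Finset.prod_le_prod (fun i _ => by positivity) fun i _ => ?_
          have := Real.add_one_le_exp (√(∑ j, N i j ^ 2) / m)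
          have h2 := mul_le_mul_of_nonneg_left this hm.le
          have h3 : m * (√(∑ j, N i j ^ 2) / m + 1) = m + √(∑ j, N i j ^ 2) := by field_simp; ring
          linarith
      _ = m^d * Real.exp ((∑ i, √(∑ j, N i j ^ 2)) / m) := by
          rw [Finset.prod_mul_distrib, ← Real.exp_sum, Finset.sum_div]; simp
      _ ≤ _ := by gcongr
  linarith

/-- Let `d ≥ 1`, let `h ≥ 4` be a Hadamard order with Hadamard matrix `A`
(so `4 ∣ h`), and for `B ∈ {−1,1}^{h×d}` set `C = sgn(AᵀB)ᵀ`,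
`F = C A⁻¹ B`, `G = F + I`.  Then there exists a choice of `B` such that
`det G ≥ μ(h)^d (1 − 2d√((d−1)e)/μ(h))`. -/
theorem exists_B_det_G_lower_bound_Lovasz (h d : ℕ)
    (h4 : 4 ∣ h) (hh : 4 ≤ h) (hd : 1 ≤ d)
    (A : Matrix (Fin h) (Fin h) ℝ)
    (hA1 : ∀ i j, A i j = 1 ∨ A i j = -1)
    (hA2 : Aᵀ * A = (h : ℝ) • 1) :
    ∃ B : Matrix (Fin h) (Fin d) ℝ,
      (∀ i j, B i j = 1 ∨ B i j = -1) ∧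
      (Fmat A B + 1).det ≥
        mu h ^ d *
          (1 - 2 * (d : ℝ) * Real.sqrt (((d : ℝ) - 1) * Real.exp 1) / mu h) := by

  have hmu := mu_pos h
  have hmu0 : 0 < mu h := by linarith
  set z := 2 * (d : ℝ) * Real.sqrt (((d : ℝ) - 1) * Real.exp 1) / mu h with hz
  rcases lt_or_ge 1 z with hz1 | hz1
  · refine ⟨colMat (fun _ _ => true), colMat_pm _, ?_⟩
    have hF : Fmat A (colMat (d := d) (fun _ _ => true)) + 1 =
        1 + Matrix.replicateCol Unit (fun _ : Fin d => Phi A (fun _ => true) (fun _ => true)) *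
          Matrix.replicateRow Unit (fun _ : Fin d => (1:ℝ)) := by
      ext i j
      rw [Matrix.add_apply, Fmat_apply hh A hA2]
      simp [Matrix.mul_apply, add_comm]
    rw [hF, Matrix.det_one_add_replicateCol_mul_replicateRow]
    have h0 := Phi_self_nonneg A (fun _ => true)
    have h1 : 0 ≤ (fun _ : Fin d => (1:ℝ)) ⬝ᵥ (fun _ : Fin d => Phi A (fun _ => true) (fun _ => true)) := by
      simp only [dotProduct]; positivity
    have h2 : 0 < mu h ^ d := by positivity
    nlinarith
  rcases Nat.lt_or_ge 1 d with hd2 | hd2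
  · obtain ⟨b, hb⟩ := exists_good (d := d) h4 hh A hA1 hA2
    refine ⟨colMat b, colMat_pm b, ?_⟩
    have hdet := det_bound (mu h) hmu0 _ hb
    rw [add_sub_cancel] at hdet
    refine le_trans ?_ hdet
    refine mul_le_mul_of_nonneg_left ?_ (by positivity)
    have hdr : (2:ℝ) ≤ d := by exact_mod_cast hd2
    have he : (2.7:ℝ) ≤ Real.exp 1 := by have := Real.exp_one_gt_d9; linarith
    set y := (d:ℝ) * √(d+1) / mu h with hy
    have hy0 : 0 ≤ y := by positivity
    have hz0 : 0 ≤ z := by positivity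
    have hyz : y ≤ 0.6 * z := by
      have hs : √((d:ℝ)+1) ≤ 0.6 * (2 * √(((d : ℝ) - 1) * Real.exp 1)) := by
        apply le_of_sq_le_sq ?_ (by positivity)
        rw [mul_pow, mul_pow, Real.sq_sqrt (by positivity), Real.sq_sqrt (mul_nonneg (by linarith) (by positivity))]
        nlinarith
      have : 0.6 * z = d * (0.6 * (2 * √(((d : ℝ) - 1) * Real.exp 1))) / mu h := by rw [hz]; ring
      rw [this, hy]
      gcongr
    have hexp := Real.abs_exp_sub_one_sub_id_le (x := y) (by rw [abs_of_nonneg hy0]; linarith)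
    have := (abs_le.mp hexp).2
    nlinarith
  · obtain rfl : d = 1 := by omega
    have hex : ∃ a : Fin h → Bool, mu h - 1 ≤ Phi A a a := by
      by_contra! hcon
      have hlt := Finset.sum_lt_sum_of_nonempty (s := Finset.univ) Finset.univ_nonempty fun a _ => hcon a
      rw [sum_diag h4 hh A hA1] at hlt
      simp at hlt
      linarith
    obtain ⟨a, ha⟩ := hex
    refine ⟨colMat (fun _ => a), colMat_pm _, ?_⟩
    rw [Matrix.det_fin_one, Matrix.add_apply, Fmat_apply hh A hA2]
    simp [hz]
    linarith
end
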